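/- Let a > 0, c > 0, ε ∈ ℝ, K ∈ ℝ with ε < K, B ∈ ℝ, and define ψ(π) = 1 − (c(π−ε)/a)(1 − e^{−a/(c(π−ε))}) for π > ε. Then for every natural number n, the function π ↦ (1 − ψ(π)^n)(π − K) + B is convex on the interval (ε, K]. -/

import Mathlib

/-!
In the rescaled price `x = c (p - ε) / a` the rejection probability is `1 - x (1 - exp (-1/x))`.
Up to an affine term this is the perspective of `exp` along the line `(x, -1)`, so it is convex.
It is also `1` minus the slope of `exp` between `-1/x` and `0`; this slope lies in `[0, 1]` and
increases with `x`, because `exp` is increasing and convex with derivative `1` at `0`. Hence `ψ` is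
convex, decreasing and `[0, 1]`-valued, so `1 - ψ ^ n` is nonnegative, concave and nondecreasing,
and its product with the nonpositive increasing affine factor `p - K` is convex.
-/

section Perspective

variable {𝕜 E β : Type*} [Field 𝕜] [AddCommMonoid E] [Module 𝕜 E]

/-- The perspective of `f`: the positively homogeneous extension of `f` from the hyperplane
`{1} × E` to the half-space `{(t, x) | 0 < t}`, outside which its values are meaningless. -/
def perspective [SMul 𝕜 β] (f : E → β) (p : 𝕜 × E) : β := p.1 • f (p.1⁻¹ • p.2)

theorem inv_smul_smul_add_smul {t u : 𝕜} (ht : t ≠ 0) (hu : u ≠ 0) (a b v : 𝕜) (x y : E) :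
    v⁻¹ • (a • x + b • y) = (a * t / v) • t⁻¹ • x + (b * u / v) • u⁻¹ • y := by
  have cancel (c : 𝕜) {w : 𝕜} (hw : w ≠ 0) : c * w / v * w⁻¹ = v⁻¹ * c := by field_simp
  rw [smul_smul, smul_smul, cancel a ht, cancel b hu, mul_smul, mul_smul, smul_add]

variable [LinearOrder 𝕜] [IsStrictOrderedRing 𝕜]

theorem convex_setOf_pos_and_inv_smul_mem {s : Set E} (hs : Convex 𝕜 s) :
    Convex 𝕜 {p : 𝕜 × E | 0 < p.1 ∧ p.1⁻¹ • p.2 ∈ s} := by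
  rintro ⟨t, x⟩ ⟨ht : 0 < t, hx⟩ ⟨u, y⟩ ⟨hu : 0 < u, hy⟩ a b ha hb hab
  have hv : 0 < a * t + b * u := convex_Ioi 0 ht hu ha hb hab
  refine ⟨hv, ?_⟩
  change (a * t + b * u)⁻¹ • (a • x + b • y) ∈ s
  rw [inv_smul_smul_add_smul ht.ne' hu.ne']
  exact hs hx hy (by positivity) (by positivity) (by rw [← add_div, div_self hv.ne'])

theorem convexOn_perspective [AddCommMonoid β] [PartialOrder β] [Module 𝕜 β] [PosSMulMono 𝕜 β]
    {s : Set E} {f : E → β} (hf : ConvexOn 𝕜 s f) :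
    ConvexOn 𝕜 {p : 𝕜 × E | 0 < p.1 ∧ p.1⁻¹ • p.2 ∈ s} (perspective f) := by
  refine ⟨convex_setOf_pos_and_inv_smul_mem hf.1, ?_⟩
  rintro ⟨t, x⟩ ⟨ht : 0 < t, hx⟩ ⟨u, y⟩ ⟨hu : 0 < u, hy⟩ a b ha hb hab
  have hv : 0 < a * t + b * u := convex_Ioi 0 ht hu ha hb hab
  set v := a * t + b * u with hv_def
  calc v • f (v⁻¹ • (a • x + b • y))
      = v • f ((a * t / v) • t⁻¹ • x + (b * u / v) • u⁻¹ • y) := by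
        rw [inv_smul_smul_add_smul ht.ne' hu.ne']
    _ ≤ v • ((a * t / v) • f (t⁻¹ • x) + (b * u / v) • f (u⁻¹ • y)) :=
        smul_le_smul_of_nonneg_left (hf.2 hx hy (by positivity) (by positivity)
          (by rw [← add_div, ← hv_def, div_self hv.ne'])) hv.le
    _ = a • t • f (t⁻¹ • x) + b • u • f (u⁻¹ • y) := by
        simp only [smul_add, smul_smul, mul_div_cancel₀ _ hv.ne']

end Perspective

theorem convexOn_one_sub_pow_mul_sub {𝕜 : Type*} [CommRing 𝕜] [LinearOrder 𝕜]
    [IsStrictOrderedRing 𝕜] {s : Set 𝕜} {f : 𝕜 → 𝕜} {K : 𝕜} (hf : ConvexOn 𝕜 s f)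
    (hanti : AntitoneOn f s) (hf01 : Set.MapsTo f s (Set.Icc 0 1)) (hs : s ⊆ Set.Iic K) (n : ℕ) :
    ConvexOn 𝕜 s fun x => (1 - f x ^ n) * (x - K) := by
  have hf0 : ∀ ⦃x⦄, x ∈ s → 0 ≤ f x := fun x hx => (hf01 hx).1
  have hconc : ConcaveOn 𝕜 s fun x => 1 - f x ^ n :=
    (concaveOn_const 1 hf.1).sub (hf.pow hf0 n)
  have hconv : ConvexOn 𝕜 s fun x => x - K := (convexOn_id hf.1).sub (concaveOn_const K hf.1)
  have hmono : MonotoneOn (fun x => 1 - f x ^ n) s := fun x hx y hy hxy =>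
    sub_le_sub_left (pow_le_pow_left₀ (hf0 hy) (hanti hx hy hxy) n) 1
  have hmono' : MonotoneOn (fun x => x - K) s := fun x _ y _ hxy => sub_le_sub_right hxy K
  exact hconc.mul_convexOn hconv (fun x hx => sub_nonneg.2 (pow_le_one₀ (hf0 hx) (hf01 hx).2))
    (fun x hx => sub_nonpos.2 (hs hx)) (hmono.monovaryOn hmono')

/-- The probability that a single helper rejects the price `p`, as a function of the rescaled
price `x = c (p - ε) / a`. -/
noncomputable def rejectProb (x : ℝ) : ℝ := 1 - x * (1 - Real.exp (-x⁻¹))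

theorem rejectProb_eq_one_sub_slope_exp (x : ℝ) :
    rejectProb x = 1 - slope Real.exp (-x⁻¹) 0 := by
  simp only [rejectProb, slope_def_field, Real.exp_zero, sub_neg_eq_add, zero_add, div_inv_eq_mul,
    mul_comm]

theorem rejectProb_le_one (x : ℝ) : rejectProb x ≤ 1 := by
  rw [rejectProb_eq_one_sub_slope_exp]
  exact sub_le_self 1
    ((Real.exp_monotone.monotoneOn Set.univ).slope_nonneg (Set.mem_univ _) (Set.mem_univ _))

theorem rejectProb_nonneg {x : ℝ} (hx : 0 < x) : 0 ≤ rejectProb x := by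
  rw [rejectProb_eq_one_sub_slope_exp, sub_nonneg]
  exact convexOn_exp.slope_le_of_hasDerivAt (Set.mem_univ _) (Set.mem_univ _)
    (neg_lt_zero.2 (inv_pos.2 hx)) (by simpa only [Real.exp_zero] using Real.hasDerivAt_exp 0)

theorem antitoneOn_rejectProb : AntitoneOn rejectProb (Set.Ioi 0) := by
  intro x (hx : 0 < x) y (hy : 0 < y) hxy
  simp only [rejectProb_eq_one_sub_slope_exp, slope_comm Real.exp _ 0]
  have mem {z : ℝ} (hz : 0 < z) : -z⁻¹ ∈ Set.univ \ {(0 : ℝ)} :=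
    ⟨Set.mem_univ _, (neg_lt_zero.2 (inv_pos.2 hz)).ne⟩
  exact sub_le_sub_left (convexOn_exp.slope_mono (Set.mem_univ 0) (mem hx) (mem hy)
    (neg_le_neg (inv_anti₀ hx hxy))) 1

theorem convexOn_rejectProb : ConvexOn ℝ (Set.Ioi 0) rejectProb := by
  have hpersp : ConvexOn ℝ (Set.Ioi 0) fun x : ℝ => x * Real.exp (-x⁻¹) := by
    have h := (convexOn_perspective (𝕜 := ℝ) convexOn_exp).comp_affineMap
      ((AffineMap.id ℝ ℝ).prod (AffineMap.const ℝ ℝ (-1)))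
    exact (h.subset (fun x hx => ⟨hx, Set.mem_univ _⟩) (convex_Ioi 0)).congr fun x _ => by
      change x * Real.exp (x⁻¹ * -1) = x * Real.exp (-x⁻¹)
      rw [mul_neg_one]
  have haffine : ConvexOn ℝ (Set.Ioi 0) fun x : ℝ => 1 - x :=
    (convexOn_const 1 (convex_Ioi 0)).sub (concaveOn_id (convex_Ioi 0))
  refine (haffine.add hpersp).congr fun x _ => ?_
  simp only [rejectProb, Pi.add_apply]
  ring

/-- Per-term convexity used in Proposition 4.1: for every `n : ℕ`, the
conditional expected cost `(1 − ψ(p)ⁿ)(p − K) + B` is convex on `(ε, K]`. -/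
theorem conditional_expected_cost_convex
    (a c ε K B : ℝ) (ha : 0 < a) (hc : 0 < c) (hεK : ε < K)
    (ψ : ℝ → ℝ)
    (hψ : ∀ p : ℝ, ψ p =
      1 - (c * (p - ε) / a) * (1 - Real.exp (-a / (c * (p - ε))))) :
    ∀ n : ℕ,
      ConvexOn ℝ (Set.Ioc ε K) (fun p : ℝ => (1 - ψ p ^ n) * (p - K) + B) := by
  intro n
  let rescale : ℝ →ᵃ[ℝ] ℝ := (c / a) • (AffineMap.id ℝ ℝ - AffineMap.const ℝ ℝ ε)
  have rescale_apply (p : ℝ) : rescale p = c * (p - ε) / a := div_mul_eq_mul_div c a (p - ε)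
  have rescale_pos : Set.MapsTo rescale (Set.Ioc ε K) (Set.Ioi 0) := fun p hp => by
    rw [Set.mem_Ioi, rescale_apply]
    exact div_pos (mul_pos hc (sub_pos.2 hp.1)) ha
  have rescale_mono : Monotone rescale := fun p q hpq => by
    simp only [rescale_apply]
    gcongr
  obtain rfl : ψ = rejectProb ∘ rescale := by
    ext p
    rw [hψ, Function.comp_apply, rejectProb, rescale_apply, inv_div, neg_div]
  exact (convexOn_one_sub_pow_mul_sub
    ((convexOn_rejectProb.comp_affineMap rescale).subset rescale_pos (convex_Ioc ε K))
    (antitoneOn_rejectProb.comp_MonotoneOn (rescale_mono.monotoneOn _) rescale_pos)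
    (fun p hp => ⟨rejectProb_nonneg (rescale_pos hp), rejectProb_le_one _⟩)
    Set.Ioc_subset_Iic_self n).add_const B
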